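/- Let c be a recurrent chip configuration. Then (ĉ)° is s-recurrent, there exists t ∈ ℕ such that c ~ φ((ĉ)°) + t·δ_s, and lvl(c) ≥ slvl((ĉ)°). -/

import Mathlib

open Finset Polynomial

namespace SandpileBM

variable {V E : Type} [Fintype V] [DecidableEq V] [Fintype E] [DecidableEq E]

/-- The number of edges from `v` to `w` in the multigraph given by `src`, `tgt`. -/
def numEdges (src tgt : E → V) (v w : V) : ℕ :=
  (Finset.univ.filter fun e => src e = v ∧ tgt e = w).card

/-- The out-degree of a vertex. -/
def outdeg (src : E → V) (v : V) : ℕ :=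
  (Finset.univ.filter fun e => src e = v).card

/-- The in-degree of a vertex. -/
def indeg (tgt : E → V) (v : V) : ℕ :=
  (Finset.univ.filter fun e => tgt e = v).card

/-- The digraph is strongly connected: any vertex is reachable from any other by
a directed path. -/
def StronglyConnected (src tgt : E → V) : Prop :=
  ∀ v w : V, Relation.ReflTransGen (fun a b => ∃ e : E, src e = a ∧ tgt e = b) v w

/-- Result of firing the vertex `v` on the chip configuration `c` (sinkless model). -/
def fire (src tgt : E → V) (c : V → ℕ) (v : V) : V → ℕ :=
  fun w => c w + numEdges src tgt v w - (if w = v then outdeg src v else 0)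

/-- One legal firing move in the sinkless model. -/
def FireStep (src tgt : E → V) (c d : V → ℕ) : Prop :=
  ∃ v : V, outdeg src v ≤ c v ∧ d = fire src tgt c v

/-- `Reach c d`: `d` is obtained from `c` by a finite sequence of legal firing moves. -/
def Reach (src tgt : E → V) : (V → ℕ) → (V → ℕ) → Prop :=
  Relation.ReflTransGen (FireStep src tgt)

/-- Stability of a chip configuration. -/
def Stable (src : E → V) (c : V → ℕ) : Prop :=
  ∀ v : V, c v < outdeg src v

/-- A chip configuration is recurrent if it is not stable and every configuration
accessible from it can reach it back. -/
def Recurrent (src tgt : E → V) (c : V → ℕ) : Prop :=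
  ¬ Stable src c ∧ ∀ d : V → ℕ, Reach src tgt c d → Reach src tgt d c

/-- Level (total number of chips) of a chip configuration. -/
def lvl (c : V → ℕ) : ℕ := ∑ v : V, c v

/-- Indicator function of the vertex `s`. -/
def deltaS (s : V) : V → ℕ := fun v => if v = s then 1 else 0

/-- Result of firing the vertex `v` on an `s`-configuration. -/
def sfire (src tgt : E → V) (s : V) (c : {v : V // v ≠ s} → ℕ) (v : {v : V // v ≠ s}) :
    {v : V // v ≠ s} → ℕ :=
  fun w => c w + numEdges src tgt v.1 w.1 - (if w = v then outdeg src v.1 else 0)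

/-- One legal s-firing move. -/
def SFireStep (src tgt : E → V) (s : V) (c d : {v : V // v ≠ s} → ℕ) : Prop :=
  ∃ v : {v : V // v ≠ s}, outdeg src v.1 ≤ c v ∧ d = sfire src tgt s c v

/-- `SReach c d`: `d` is obtained from `c` by a finite sequence of legal s-firing moves. -/
def SReach (src tgt : E → V) (s : V) :
    ({v : V // v ≠ s} → ℕ) → ({v : V // v ≠ s} → ℕ) → Prop :=
  Relation.ReflTransGen (SFireStep src tgt s)

/-- Stability of an `s`-configuration. -/
def SStable (src : E → V) (s : V) (c : {v : V // v ≠ s} → ℕ) : Prop :=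
  ∀ v : {v : V // v ≠ s}, c v < outdeg src v.1

/-- The stabilization `c°` of an `s`-configuration: the (for strongly connected digraphs,
unique) stable `s`-configuration reachable from `c` by legal s-firing moves. -/
noncomputable def stab (src tgt : E → V) (s : V) (c : {v : V // v ≠ s} → ℕ) :
    {v : V // v ≠ s} → ℕ :=
  Classical.epsilon fun d => SReach src tgt s c d ∧ SStable src s d

/-- An `s`-configuration `c` is s-recurrent if every `s`-configuration can be completed
to one whose stabilization is `c`. -/
def SRecurrent (src tgt : E → V) (s : V) (c : {v : V // v ≠ s} → ℕ) : Prop :=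
  ∀ c₁ : {v : V // v ≠ s} → ℕ, ∃ c₂ : {v : V // v ≠ s} → ℕ,
    stab src tgt s (c₁ + c₂) = c

/-- `β_s`, recording the number of edges from `s` to each other vertex. -/
def betaS (src tgt : E → V) (s : V) : {v : V // v ≠ s} → ℕ :=
  fun v => numEdges src tgt s v.1

/-- The relation `~_s` on s-recurrent configurations: `d = (c + k·β_s)°` for some `k`. -/
def SEquiv (src tgt : E → V) (s : V) (c d : {v : V // v ≠ s} → ℕ) : Prop :=
  ∃ k : ℕ, stab src tgt s (c + k • betaS src tgt s) = d

/-- Restriction of a chip configuration to `V ∖ {s}`. -/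
def restrictS (s : V) (c : V → ℕ) : {v : V // v ≠ s} → ℕ := fun v => c v.1

/-- Extension `c̄` of an `s`-configuration by `0` at `s`. -/
def extendS (s : V) (c : {v : V // v ≠ s} → ℕ) : V → ℕ :=
  fun v => if h : v = s then 0 else c ⟨v, h⟩

/-- The s-index `χ(c)`: the least `k` such that `c̄ + k·δ_s` is recurrent. -/
noncomputable def sIndex (src tgt : E → V) (s : V) (c : {v : V // v ≠ s} → ℕ) : ℕ :=
  sInf {k : ℕ | Recurrent src tgt (extendS s c + k • deltaS s)}

/-- `φ(c) := c̄ + χ(c)·δ_s`. -/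
noncomputable def phi (src tgt : E → V) (s : V) (c : {v : V // v ≠ s} → ℕ) : V → ℕ :=
  extendS s c + sIndex src tgt s c • deltaS s

/-- The s-level `slvl(c) := χ(c) + Σ_{v ≠ s} c(v)`. -/
noncomputable def slvl (src tgt : E → V) (s : V) (c : {v : V // v ≠ s} → ℕ) : ℕ :=
  sIndex src tgt s c + ∑ v : {v : V // v ≠ s}, c v

/-- The d-level `dlvl(c) := deg⁺(s) + Σ_{v ≠ s} c(v)`. -/
def dlvl (src : E → V) (s : V) (c : {v : V // v ≠ s} → ℕ) : ℕ :=
  outdeg src s + ∑ v : {v : V // v ≠ s}, c v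

/-- The set (as a type) of recurrent chip configurations. -/
abbrev RecL (src tgt : E → V) := {c : V → ℕ // Recurrent src tgt c}

/-- The setoid on recurrent configurations generated by the relation `~` (i.e. `⤳`). -/
def recLSetoid (src tgt : E → V) : Setoid (RecL src tgt) :=
  Relation.EqvGen.setoid fun a b => Reach src tgt a.1 b.1

/-- The set of `~`-classes of recurrent configurations. -/
abbrev RecLQuot (src tgt : E → V) := Quotient (recLSetoid src tgt)

/-- The set (as a type) of s-recurrent configurations. -/
abbrev RecS (src tgt : E → V) (s : V) := {c : {v : V // v ≠ s} → ℕ // SRecurrent src tgt s c}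

/-- The setoid on s-recurrent configurations generated by the relation `~_s`. -/
def recSSetoid (src tgt : E → V) (s : V) : Setoid (RecS src tgt s) :=
  Relation.EqvGen.setoid fun a b => SEquiv src tgt s a.1 b.1

/-- The set of `~_s`-classes of s-recurrent configurations. -/
abbrev RecSQuot (src tgt : E → V) (s : V) := Quotient (recSSetoid src tgt s)

/-- The level of a `~`-class of recurrent configurations (level is constant on classes). -/
noncomputable def lvlClass (src tgt : E → V) (q : RecLQuot src tgt) : ℕ :=
  sSup ((fun c : RecL src tgt => lvl c.1) '' {c | Quotient.mk (recLSetoid src tgt) c = q})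

/-- The s-level of a `~_s`-class (s-level is constant on classes). -/
noncomputable def slvlClass (src tgt : E → V) (s : V) (q : RecSQuot src tgt s) : ℕ :=
  sSup ((fun c : RecS src tgt s => slvl src tgt s c.1) ''
    {c | Quotient.mk (recSSetoid src tgt s) c = q})

/-- The d-level of a `~_s`-class: the maximum d-level over the class. -/
noncomputable def dlvlClass (src tgt : E → V) (s : V) (q : RecSQuot src tgt s) : ℕ :=
  sSup ((fun c : RecS src tgt s => dlvl src s c.1) ''
    {c | Quotient.mk (recSSetoid src tgt s) c = q})

/-- The Biggs–Merino polynomial `B(G,s;y) = Σ_{[c] ∈ Rec(G,s)/~_s} y^{dlvl([c])}`. -/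
noncomputable def BM (src tgt : E → V) (s : V) : Polynomial ℤ :=
  ∑ᶠ q : RecSQuot src tgt s, X ^ dlvlClass src tgt s q

/-- `LegalSeq l c d`: firing the vertices in the list `l` in order is a sequence of
legal firing moves transforming `c` into `d` (sinkless model). -/
def LegalSeq (src tgt : E → V) : List V → (V → ℕ) → (V → ℕ) → Prop
  | [], c, d => d = c
  | v :: l, c, d => outdeg src v ≤ c v ∧ LegalSeq src tgt l (fire src tgt c v) d

/-- `SLegalSeq l c d`: firing the vertices in the list `l` in order is a sequence of
legal s-firing moves transforming `c` into `d`. -/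
def SLegalSeq (src tgt : E → V) (s : V) :
    List {v : V // v ≠ s} → ({v : V // v ≠ s} → ℕ) → ({v : V // v ≠ s} → ℕ) → Prop
  | [], c, d => d = c
  | v :: l, c, d => outdeg src v.1 ≤ c v ∧ SLegalSeq src tgt s l (sfire src tgt s c v) d

/-- The configuration obtained from `c` after firing the vertices of `l` in order. -/
def iterFire (src tgt : E → V) (c : V → ℕ) (l : List V) : V → ℕ :=
  l.foldl (fire src tgt) c

/-- The Laplacian of the digraph applied to an integer vector:
`(Δq)(v) = deg⁺(v)·q(v) − Σ_w A(w,v)·q(w)`. -/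
def lapApply (src tgt : E → V) (q : V → ℤ) : V → ℤ :=
  fun v => (outdeg src v : ℤ) * q v - ∑ w : V, (numEdges src tgt w v : ℤ) * q w

/-- `r` is the primitive period vector of the digraph: it has positive entries with
gcd `1`, lies in the kernel of the Laplacian, and generates this kernel. -/
def IsPeriodVector (src tgt : E → V) (r : V → ℕ) : Prop :=
  (∀ v : V, 0 < r v) ∧ Finset.univ.gcd r = 1 ∧
    lapApply src tgt (fun v => (r v : ℤ)) = 0 ∧
    ∀ q : V → ℤ, lapApply src tgt q = 0 → ∃ k : ℤ, q = k • fun v => (r v : ℤ)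

/-- The Laplacian matrix of the digraph. -/
def lapMatrix (src tgt : E → V) : Matrix V V ℤ :=
  Matrix.of fun v w =>
    if v = w then (outdeg src v : ℤ) - numEdges src tgt v v
    else -(numEdges src tgt w v : ℤ)

/-- The determinant of the reduced Laplacian obtained by deleting the row and
column indexed by `v`. -/
def reducedLapDet (src tgt : E → V) (v : V) : ℤ :=
  (((lapMatrix src tgt).submatrix (fun a : {w : V // w ≠ v} => a.1)
    (fun a : {w : V // w ≠ v} => a.1)).det)

/-- The period constant `α := gcd_{v ∈ V} det Δ_v`. -/
def periodConstant (src tgt : E → V) : ℤ :=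
  Finset.univ.gcd (reducedLapDet src tgt)

/-- `IsWalk l a b`: the list of edges `l` forms a directed walk from `a` to `b`. -/
def IsWalk (src tgt : E → V) : List E → V → V → Prop
  | [], a, b => a = b
  | e :: l, a, b => src e = a ∧ IsWalk src tgt l (tgt e) b

/-- `IsPath l a b`: the list of edges `l` forms a directed path from `a` to `b`:
all visited vertices are distinct (except that the final vertex is allowed to
coincide with the starting vertex). -/
def IsPath (src tgt : E → V) (l : List E) (a b : V) : Prop :=
  IsWalk src tgt l a b ∧ (l.map tgt).Nodup ∧ a ∉ (l.map tgt).dropLast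

/-- `T` is an arborescence rooted at `s`: for every vertex `v` there is a unique
directed path from `s` to `v` using only edges of `T`. -/
def IsArborescence (src tgt : E → V) (s : V) (T : Finset E) : Prop :=
  ∀ v : V, ∃! l : List E, (∀ e ∈ l, e ∈ T) ∧ IsPath src tgt l s v

/-- The edge `e ∉ T` is externally active for the arborescence `T` (w.r.t. the linear
order on `E`): where `P₁`, `P₂` are the two edge-disjoint directed paths in `T ∪ {e}`
sharing their starting vertex and ending at `tgt e`, with `e ∈ P₁`, the smallest edge
on `P₁ ++ P₂` lies on `P₁`. -/
def ExtActive [LinearOrder E] (src tgt : E → V) (T : Finset E) (e : E) : Prop :=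
  e ∉ T ∧ ∃ (u : V) (p₁ p₂ : List E),
    (∀ f ∈ p₁, f ∈ T ∨ f = e) ∧ (∀ f ∈ p₂, f ∈ T ∨ f = e) ∧
    IsPath src tgt p₁ u (tgt e) ∧ IsPath src tgt p₂ u (tgt e) ∧
    e ∈ p₁ ∧ (∀ f ∈ p₁, f ∉ p₂) ∧
    ∃ fmin ∈ p₁, ∀ f ∈ p₁ ++ p₂, fmin ≤ f

/-- The external activity `e(T)` of an arborescence `T`. -/
noncomputable def extActivity [LinearOrder E] (src tgt : E → V) (T : Finset E) : ℕ :=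
  Nat.card {e : E // ExtActive src tgt T e}

/-- The greedoid Tutte polynomial `T(G,s;y) = Σ_{T ∈ A(G,s)} y^{e(T)}`. -/
noncomputable def greedoidTutte [LinearOrder E] (src tgt : E → V) (s : V) : Polynomial ℤ :=
  ∑ᶠ T : {T : Finset E // IsArborescence src tgt s T}, X ^ extActivity src tgt T.1

/-- `f` is a `G^r`-parking function rooted at `s`. -/
def IsParking (src tgt : E → V) (s : V) (f : {v : V // v ≠ s} → ℕ) : Prop :=
  ∀ A : Finset {v : V // v ≠ s}, A.Nonempty →
    ∃ v ∈ A, f v < Nat.card {e : E // (∀ w ∈ A, src e ≠ w.1) ∧ tgt e = v.1}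

/-- The d-level of a `G^r`-parking function: `|E| − |V| + 1 − Σ_{v≠s} f(v)`. -/
noncomputable def parkDlvl (src : E → V) (s : V) (f : {v : V // v ≠ s} → ℕ) : ℕ :=
  ((Fintype.card E : ℤ) - Fintype.card V + 1 - ∑ v : {v : V // v ≠ s}, (f v : ℤ)).toNat

/-- `σ` is an s-decreasing traversal: a sequence in which every vertex and edge of `G`
appears exactly once, satisfying (R1) every vertex other than `s` is immediately
preceded by an edge targeting it, and (R2) every edge is the `<ₑ`-maximum edge not yet
seen whose source has been seen. -/
def IsTraversal [LinearOrder E] (src tgt : E → V) (s : V) (σ : List (V ⊕ E)) : Prop :=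
  σ.Nodup ∧ (∀ x : V ⊕ E, x ∈ σ) ∧
  (∀ (i : ℕ) (hi : i < σ.length) (v : V),
      σ.get ⟨i, hi⟩ = Sum.inl v → v ≠ s →
      0 < i ∧ ∃ e : E, tgt e = v ∧ σ.get ⟨i - 1, by omega⟩ = Sum.inr e) ∧
  (∀ (i : ℕ) (hi : i < σ.length) (e : E),
      σ.get ⟨i, hi⟩ = Sum.inr e →
      Sum.inl (src e) ∈ σ.take i ∧
      ∀ f : E, Sum.inr f ∉ σ.take i → Sum.inl (src f) ∈ σ.take i → f ≤ e)

open scoped Classical in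
/-- `Υ(σ)`: the set of edges immediately preceding a non-sink vertex in `σ`. -/
noncomputable def Upsilon (src tgt : E → V) (s : V) (σ : List (V ⊕ E)) : Finset E :=
  Finset.univ.filter fun e =>
    ∃ (i : ℕ) (hi : i < σ.length) (v : V), v ≠ s ∧ σ.get ⟨i, hi⟩ = Sum.inl v ∧
      0 < i ∧ ∃ hj : i - 1 < σ.length, σ.get ⟨i - 1, hj⟩ = Sum.inr e

/-- The strength of `σ`: the number of strong edges, i.e. edges whose target appears
before them in `σ`. -/
noncomputable def strength (tgt : E → V) (σ : List (V ⊕ E)) : ℕ :=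
  Nat.card {e : E // ∃ (i : ℕ) (hi : i < σ.length),
    σ.get ⟨i, hi⟩ = Sum.inr e ∧ Sum.inl (tgt e) ∈ σ.take i}

/-- `Ψ(σ)(v)`: one less than the number of edges targeting `v` that appear before the
vertex `v` in `σ`. -/
def Psi (tgt : E → V) (s : V) (σ : List (V ⊕ E)) : {v : V // v ≠ s} → ℕ :=
  fun v =>
    (((σ.takeWhile fun x => x ≠ Sum.inl v.1).filterMap Sum.getRight?).filter
      fun e => tgt e = v.1).length - 1

theorem fire_add_eq (src tgt : E → V) (c : V → ℕ) (v w : V) (h : outdeg src v ≤ c v) :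
    fire src tgt c v w + (if w = v then outdeg src v else 0) = c w + numEdges src tgt v w := by
  unfold fire
  split_ifs with hw
  · subst hw; omega
  · omega

theorem sum_numEdges (src tgt : E → V) (v : V) :
    ∑ w : V, numEdges src tgt v w = outdeg src v := by
  unfold numEdges outdeg
  rw [Finset.card_eq_sum_card_fiberwise (f := tgt) (t := Finset.univ) (by intro x _; simp)]
  simp only [Finset.filter_filter]

theorem lvl_fire (src tgt : E → V) (c : V → ℕ) (v : V) (h : outdeg src v ≤ c v) :
    lvl (fire src tgt c v) = lvl c := by
  have h1 : ∑ w : V, (fire src tgt c v w + (if w = v then outdeg src v else 0)) =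
      ∑ w : V, (c w + numEdges src tgt v w) :=
    Finset.sum_congr rfl fun w _ => fire_add_eq src tgt c v w h
  rw [Finset.sum_add_distrib, Finset.sum_add_distrib, sum_numEdges] at h1
  simp only [Finset.sum_ite_eq', Finset.mem_univ, if_true] at h1
  unfold lvl
  omega

theorem LegalSeq.lvl_eq (src tgt : E → V) (l : List V) : ∀ c d : V → ℕ,
    LegalSeq src tgt l c d → lvl d = lvl c := by
  induction l with
  | nil => intro c d h; rw [show d = c from h]
  | cons v l ih =>
    intro c d h
    rw [ih _ _ h.2, lvl_fire src tgt c v h.1]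

theorem LegalSeq.append (src tgt : E → V) (l m : List V) : ∀ a b c : V → ℕ,
    LegalSeq src tgt l a b → LegalSeq src tgt m b c → LegalSeq src tgt (l ++ m) a c := by
  induction l with
  | nil => intro a b c h h2; rw [show b = a from h] at h2; exact h2
  | cons v l ih => intro a b c h h2; exact ⟨h.1, ih _ _ _ h.2 h2⟩

theorem LegalSeq.reach (src tgt : E → V) (l : List V) : ∀ c d : V → ℕ,
    LegalSeq src tgt l c d → Reach src tgt c d := by
  induction l with
  | nil => intro c d h; rw [show d = c from h]; exact Relation.ReflTransGen.refl
  | cons v l ih =>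
    intro c d h
    exact Relation.ReflTransGen.head ⟨v, h.1, rfl⟩ (ih _ _ h.2)

theorem Reach.exists_legalSeq (src tgt : E → V) {c d : V → ℕ} (h : Reach src tgt c d) :
    ∃ l, LegalSeq src tgt l c d := by
  refine Relation.ReflTransGen.head_induction_on h ⟨[], rfl⟩ ?_
  rintro a b ⟨v, hv, rfl⟩ _ ⟨l, hl⟩
  exact ⟨v :: l, hv, hl⟩

theorem LegalSeq.mono (src tgt : E → V) (w : V) (l : List V) : ∀ c d : V → ℕ,
    LegalSeq src tgt l c d → w ∉ l →
    c w ≤ d w ∧ ∀ v ∈ l, 0 < numEdges src tgt v w → c w < d w := by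
  induction l with
  | nil => intro c d h _; rw [show d = c from h]; simp
  | cons u l ih =>
    intro c d h hw
    simp only [List.mem_cons, not_or] at hw
    obtain ⟨h1, h2⟩ := ih _ _ h.2 hw.2
    have h3 := fire_add_eq src tgt c u w h.1
    rw [if_neg hw.1] at h3
    refine ⟨by omega, ?_⟩
    intro v hv hn
    rcases List.mem_cons.1 hv with rfl | hv
    · omega
    · have := h2 v hv hn; omega

theorem numEdges_pos (src tgt : E → V) (e : E) : 0 < numEdges src tgt (src e) (tgt e) :=
  Finset.card_pos.2 ⟨e, by simp⟩

theorem LegalSeq.loop_mem (src tgt : E → V) (hG : StronglyConnected src tgt) (l : List V)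
    (c : V → ℕ) (h : LegalSeq src tgt l c c) (v : V) (hv : v ∈ l) (w : V) : w ∈ l := by
  induction hG v w with
  | refl => exact hv
  | tail _ he ih =>
    obtain ⟨e, rfl, rfl⟩ := he
    by_contra hw
    exact lt_irrefl _ ((LegalSeq.mono src tgt _ l c c h hw).2 _ ih (numEdges_pos src tgt e))

theorem finite_lvl (L : ℕ) : Finite {c : V → ℕ // lvl c = L} := by
  have : ({c : V → ℕ | lvl c = L}).Finite := by
    refine (Set.finite_Icc (0 : V → ℕ) (fun _ => L)).subset ?_
    intro c hc
    refine ⟨fun _ => Nat.zero_le _, fun v => ?_⟩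
    rw [← show lvl c = L from hc]
    exact Finset.single_le_sum (f := c) (fun _ _ => Nat.zero_le _) (Finset.mem_univ v)
  exact this

theorem exists_stabilizing (src tgt : E → V) (hG : StronglyConnected src tgt) (s : V)
    (c : V → ℕ) : ∃ l d, s ∉ l ∧ LegalSeq src tgt l c d ∧ SStable src s (restrictS s d) := by
  haveI := finite_lvl (V := V) (lvl c)
  let R : {d : V → ℕ // lvl d = lvl c} → {d : V → ℕ // lvl d = lvl c} → Prop :=
    fun a b => ∃ l, l ≠ [] ∧ s ∉ l ∧ LegalSeq src tgt l b.1 a.1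
  haveI : IsTrans _ R := ⟨by
    rintro a b d ⟨l, h1, h2, h3⟩ ⟨m, h4, h5, h6⟩
    exact ⟨m ++ l, by simp [h1], by simp [h2, h5], LegalSeq.append src tgt _ _ _ _ _ h6 h3⟩⟩
  haveI : Std.Irrefl R := ⟨by
    rintro a ⟨l, h1, h2, h3⟩
    obtain ⟨v, hv⟩ := List.exists_mem_of_ne_nil l h1
    exact h2 (LegalSeq.loop_mem src tgt hG l _ h3 v hv s)⟩
  have wf : WellFounded R := Finite.wellFounded_of_trans_of_irrefl R
  have key : ∀ a : {d : V → ℕ // lvl d = lvl c}, ∃ l d, s ∉ l ∧ LegalSeq src tgt l a.1 d ∧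
      SStable src s (restrictS s d) := by
    intro a
    induction a using wf.induction with
    | _ a ih =>
      by_cases hs : SStable src s (restrictS s a.1)
      · exact ⟨[], a.1, by simp, rfl, hs⟩
      · unfold SStable at hs
        push Not at hs
        obtain ⟨v, hv⟩ := hs
        have hv' : outdeg src v.1 ≤ a.1 v.1 := hv
        obtain ⟨l, d, h1, h2, h3⟩ := ih ⟨fire src tgt a.1 v.1, by
          rw [lvl_fire src tgt _ _ hv', a.2]⟩ ⟨[v.1], by simp, by simpa using v.2.symm, hv', rfl⟩
        exact ⟨v.1 :: l, d, by simp [h1, v.2.symm], ⟨hv', h2⟩, h3⟩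
  exact key ⟨c, rfl⟩

theorem SFireStep.add_right (src tgt : E → V) (s : V) {a b : {v : V // v ≠ s} → ℕ}
    (x : {v : V // v ≠ s} → ℕ) (h : SFireStep src tgt s a b) :
    SFireStep src tgt s (a + x) (b + x) := by
  obtain ⟨v, hv, rfl⟩ := h
  refine ⟨v, by simp only [Pi.add_apply]; omega, ?_⟩
  funext w
  simp only [sfire, Pi.add_apply]
  split_ifs with hw
  · subst hw; omega
  · omega

theorem SReach.add_right (src tgt : E → V) (s : V) {a b : {v : V // v ≠ s} → ℕ}
    (x : {v : V // v ≠ s} → ℕ) (h : SReach src tgt s a b) :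
    SReach src tgt s (a + x) (b + x) :=
  Relation.ReflTransGen.lift (fun a => a + x) (fun _ _ h => SFireStep.add_right src tgt s x h) _ _ h

theorem SReach.join (src tgt : E → V) (s : V) {a b c : {v : V // v ≠ s} → ℕ}
    (h1 : SReach src tgt s a b) (h2 : SReach src tgt s a c) :
    ∃ d, SReach src tgt s b d ∧ SReach src tgt s c d := by
  refine Relation.church_rosser ?_ h1 h2
  rintro a b c ⟨v, hv, rfl⟩ ⟨w, hw, rfl⟩
  by_cases hvw : v = w
  · subst hvw
    exact ⟨_, Relation.ReflGen.refl, Relation.ReflTransGen.refl⟩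
  · refine ⟨sfire src tgt s (sfire src tgt s a v) w,
      Relation.ReflGen.single ⟨w, ?_, rfl⟩, Relation.ReflTransGen.single ⟨v, ?_, ?_⟩⟩
    · simp only [sfire, if_neg (Ne.symm hvw)]; omega
    · simp only [sfire, if_neg hvw]; omega
    · funext x
      simp only [sfire]
      by_cases h1 : x = v
      · subst h1
        simp only [if_true, if_neg hvw]; omega
      · by_cases h2 : x = w
        · subst h2
          simp only [if_true, if_neg h1]; omega
        · simp only [if_neg h1, if_neg h2]; omega

theorem SReach.eq_of_stable (src tgt : E → V) (s : V) {a b : {v : V // v ≠ s} → ℕ}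
    (h : SReach src tgt s a b) (ha : SStable src s a) : b = a := by
  induction h with
  | refl => rfl
  | tail _ h ih =>
    subst ih
    obtain ⟨v, hv, _⟩ := h
    exact absurd (ha v) (by omega)

theorem stab_eq (src tgt : E → V) (s : V) {a b : {v : V // v ≠ s} → ℕ}
    (h : SReach src tgt s a b) (hb : SStable src s b) : stab src tgt s a = b := by
  have := Classical.epsilon_spec (p := fun d => SReach src tgt s a d ∧ SStable src s d) ⟨b, h, hb⟩
  change SReach src tgt s a (stab src tgt s a) ∧ SStable src s (stab src tgt s a) at this
  obtain ⟨d, h1, h2⟩ := SReach.join src tgt s h this.1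
  rw [← SReach.eq_of_stable src tgt s h1 hb, SReach.eq_of_stable src tgt s h2 this.2]

theorem restrict_fire (src tgt : E → V) (s : V) (c : V → ℕ) (v : V) (hv : v ≠ s) :
    restrictS s (fire src tgt c v) = sfire src tgt s (restrictS s c) ⟨v, hv⟩ := by
  funext w
  simp only [restrictS, fire, sfire, Subtype.ext_iff]

theorem restrict_fire_s (src tgt : E → V) (s : V) (c : V → ℕ) :
    restrictS s (fire src tgt c s) = restrictS s c + betaS src tgt s := by
  funext w
  simp only [restrictS, fire, betaS, Pi.add_apply, if_neg w.2]
  omega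

theorem LegalSeq.sreach (src tgt : E → V) (s : V) (l : List V) : ∀ c d : V → ℕ,
    LegalSeq src tgt l c d →
    SReach src tgt s (restrictS s c + (l.count s) • betaS src tgt s) (restrictS s d) := by
  induction l with
  | nil => intro c d h; rw [show d = c from h]; simp; exact Relation.ReflTransGen.refl
  | cons v l ih =>
    intro c d h
    have h2 := ih _ _ h.2
    by_cases hv : v = s
    · subst hv
      rw [restrict_fire_s] at h2
      rw [List.count_cons_self, succ_nsmul', ← add_assoc]
      exact h2
    · rw [restrict_fire src tgt s c v hv] at h2
      rw [List.count_cons_of_ne hv]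
      exact Relation.ReflTransGen.head
        (SFireStep.add_right src tgt s _ ⟨⟨v, hv⟩, h.1, rfl⟩) h2

theorem fire_many (src tgt : E → V) (s : V) (v w : {v : V // v ≠ s}) (hvw : w ≠ v)
    (hn : 0 < numEdges src tgt v.1 w.1) (n : ℕ) : ∀ e : {v : V // v ≠ s} → ℕ,
    n * outdeg src v.1 ≤ e v → ∃ e', SReach src tgt s e e' ∧ e w + n ≤ e' w := by
  induction n with
  | zero => intro e _; exact ⟨e, Relation.ReflTransGen.refl, le_rfl⟩
  | succ n ih =>
    intro e he
    rw [Nat.succ_mul] at he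
    obtain ⟨e', h1, h2⟩ := ih (sfire src tgt s e v) (by simp only [sfire, if_true]; omega)
    refine ⟨e', Relation.ReflTransGen.head ⟨v, by omega, rfl⟩ h1, ?_⟩
    simp only [sfire, if_neg hvw] at h2
    omega

theorem reach_vertex (src tgt : E → V) (hG : StronglyConnected src tgt) (s w : V) (hw : w ≠ s) :
    ∀ n : ℕ, ∃ (N : ℕ) (e : {v : V // v ≠ s} → ℕ), SReach src tgt s (N • betaS src tgt s) e ∧ n ≤ e ⟨w, hw⟩ := by
  revert hw
  induction hG s w with
  | refl => intro hw; exact absurd rfl hw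
  | tail _ he ih =>
    intro hw n
    obtain ⟨e, rfl, rfl⟩ := he
    have hpos := numEdges_pos src tgt e
    by_cases hv : src e = s
    · refine ⟨n, _, Relation.ReflTransGen.refl, ?_⟩
      simp only [Pi.smul_apply, betaS, smul_eq_mul]
      rw [hv] at hpos
      exact Nat.le_mul_of_pos_right n hpos
    · by_cases hvw : tgt e = src e
      · obtain ⟨N, x, h1, h2⟩ := ih hv n
        refine ⟨N, x, h1, ?_⟩
        simpa only [hvw] using h2
      · obtain ⟨N, x, h1, h2⟩ := ih hv (n * outdeg src (src e))
        obtain ⟨y, h3, h4⟩ := fire_many src tgt s ⟨src e, hv⟩ ⟨tgt e, hw⟩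
          (by simpa [Subtype.ext_iff] using hvw) hpos n x h2
        exact ⟨N, y, h1.trans h3, by omega⟩

theorem reach_above (src tgt : E → V) (hG : StronglyConnected src tgt) (s : V)
    (c : {v : V // v ≠ s} → ℕ) (T : Finset {v : V // v ≠ s}) :
    ∃ (N : ℕ) (e : {v : V // v ≠ s} → ℕ), SReach src tgt s (N • betaS src tgt s) e ∧ ∀ v ∈ T, c v ≤ e v := by
  induction T using Finset.induction_on with
  | empty => exact ⟨0, _, Relation.ReflTransGen.refl, by simp⟩
  | insert w T hw ih =>
    obtain ⟨N, e, h1, h2⟩ := ih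
    obtain ⟨M, f, h3, h4⟩ := reach_vertex src tgt hG s w.1 w.2 (c w)
    refine ⟨N + M, e + f, ?_, ?_⟩
    · rw [add_nsmul]
      refine (SReach.add_right src tgt s _ h1).trans ?_
      rw [add_comm e, add_comm e]
      exact SReach.add_right src tgt s _ h3
    · intro v hv
      rw [Pi.add_apply]
      rcases Finset.mem_insert.1 hv with rfl | hv
      · have : c v ≤ f v := h4
        omega
      · have := h2 v hv; omega

theorem Recurrent.of_reach (src tgt : E → V) {c d : V → ℕ} (hc : Recurrent src tgt c)
    (h : Reach src tgt c d) : Recurrent src tgt d := by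
  have hdc := hc.2 d h
  refine ⟨fun hs => ?_, fun e he => (hc.2 e (h.trans he)).trans h⟩
  rcases Relation.ReflTransGen.cases_head hdc with heq | ⟨x, ⟨v, hv, _⟩, _⟩
  · exact hc.1 (heq ▸ hs)
  · exact absurd (hs v) (by omega)

theorem srecurrent_restrict (src tgt : E → V) (hG : StronglyConnected src tgt) (s : V)
    (c : V → ℕ) (hc : Recurrent src tgt c) (hs : SStable src s (restrictS s c)) :
    SRecurrent src tgt s (restrictS s c) := by
  intro c₁
  have hns := hc.1
  unfold Stable at hns
  push Not at hns
  obtain ⟨v, hv⟩ := hns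
  obtain ⟨l, hl⟩ := Reach.exists_legalSeq src tgt
    (hc.2 _ (Relation.ReflTransGen.single ⟨v, hv, rfl⟩))
  have hloop : LegalSeq src tgt (v :: l) c c := ⟨hv, hl⟩
  have hmem := LegalSeq.loop_mem src tgt hG _ c hloop v (by simp) s
  have hm : 0 < (v :: l).count s := List.count_pos_iff.2 hmem
  have hr := LegalSeq.sreach src tgt s _ c c hloop
  generalize (v :: l).count s = m at hm hr
  have hN : ∀ N : ℕ, SReach src tgt s (restrictS s c + (N * m) • betaS src tgt s)
      (restrictS s c) := by
    intro N
    induction N with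
    | zero => simp; exact Relation.ReflTransGen.refl
    | succ N ih =>
      rw [Nat.succ_mul, add_comm (N * m), add_nsmul, ← add_assoc]
      exact (SReach.add_right src tgt s _ hr).trans ih
  obtain ⟨N, e, h1, h2⟩ := reach_above src tgt hG s c₁ Finset.univ
  obtain ⟨k, hk⟩ := Nat.exists_eq_add_of_le (Nat.le_mul_of_pos_right N hm)
  have h3 := SReach.add_right src tgt s (restrictS s c + k • betaS src tgt s) h1
  have h4 := hN N
  rw [hk, add_nsmul, add_left_comm] at h4
  obtain ⟨d, h5, h6⟩ := SReach.join src tgt s h3 h4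
  rw [SReach.eq_of_stable src tgt s h6 hs] at h5
  refine ⟨(e - c₁) + (restrictS s c + k • betaS src tgt s), ?_⟩
  refine stab_eq src tgt s ?_ hs
  have : c₁ + (e - c₁ + (restrictS s c + k • betaS src tgt s)) =
      e + (restrictS s c + k • betaS src tgt s) := by
    funext v
    have := h2 v (Finset.mem_univ v)
    simp only [Pi.add_apply, Pi.sub_apply]
    omega
  rw [this]
  exact h5

theorem eq_extend_restrict (s : V) (c : V → ℕ) :
    extendS s (restrictS s c) + c s • deltaS s = c := by
  funext v
  by_cases h : v = s
  · subst h; simp [extendS, deltaS]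
  · simp [extendS, deltaS, h, restrictS]

theorem lvl_eq_restrict (s : V) (c : V → ℕ) :
    lvl c = c s + ∑ v : {v : V // v ≠ s}, restrictS s c v := by
  unfold lvl restrictS
  exact Fintype.sum_eq_add_sum_subtype_ne c s

/-- For a recurrent `c`: `(ĉ)°` is s-recurrent, `c ~ φ((ĉ)°) + t·δ_s`
for some `t ∈ ℕ`, and `lvl(c) ≥ slvl((ĉ)°)`. -/
theorem level_ge_slvl_of_recurrent [Nonempty V] (src tgt : E → V)
    (hG : StronglyConnected src tgt) (s : V) (c : V → ℕ) (hc : Recurrent src tgt c) :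
    SRecurrent src tgt s (stab src tgt s (restrictS s c)) ∧
    (∃ t : ℕ, Reach src tgt c
      (phi src tgt s (stab src tgt s (restrictS s c)) + t • deltaS s)) ∧
    slvl src tgt s (stab src tgt s (restrictS s c)) ≤ lvl c := by
  obtain ⟨l, d, hl, hld, hd⟩ := exists_stabilizing src tgt hG s c
  have hr := LegalSeq.sreach src tgt s l c d hld
  rw [List.count_eq_zero_of_not_mem hl, zero_nsmul, add_zero] at hr
  have hreach := LegalSeq.reach src tgt l c d hld
  have hrec := Recurrent.of_reach src tgt hc hreach
  rw [stab_eq src tgt s hr hd]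
  have hle : sIndex src tgt s (restrictS s d) ≤ d s := by
    apply Nat.sInf_le
    show Recurrent src tgt _
    rw [eq_extend_restrict]
    exact hrec
  refine ⟨srecurrent_restrict src tgt hG s d hrec hd,
    ⟨d s - sIndex src tgt s (restrictS s d), ?_⟩, ?_⟩
  · unfold phi
    rw [add_assoc, ← add_nsmul, Nat.add_sub_cancel' hle, eq_extend_restrict]
    exact hreach
  · rw [← LegalSeq.lvl_eq src tgt l c d hld, lvl_eq_restrict s d]
    unfold slvl
    omega

end SandpileBM
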